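/- (Legality of DMI-clustering.) Let C* be an n×k 0-1 matrix in which every row has exactly one entry equal to 1 and every column is nonzero (so C* has rank k), let B be an invertible k×k real matrix, and set A = C*B. Then for every n×k real matrix C with entries in [0,1] whose rows each sum to 1, we have |det(Cᵀ A)| ≤ |det(C*ᵀ A)|, and equality holds if and only if C = C*π for some k×k permutation matrix π. In particular, over both the hard constraint set {C ∈ {0,1}^{n×k} : each row sums to 1} and the soft constraint set {C ∈ [0,1]^{n×k} : each row sums to 1}, the maximizers of |det(Cᵀ A)| are exactly the column permutations of C*. -/

import Mathlib

open Matrix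

/-!
Since `A = C* B`, both determinants factor through `det B ≠ 0`, so the question is about
`M = Cᵀ C*`, a nonnegative matrix whose column `d` sums to the size `n_d > 0` of cluster `d`,
against `C*ᵀ C* = diag(n_d)`.  Expanding the product of the column sums gives
`∏ n_d = ∑_f ∏_d M (f d) d` over all maps `f`, and the Leibniz formula bounds `|det M|` by the part
of this sum indexed by permutations (`abs_det_le_sum_perm`).  This is the inequality
(`abs_det_le_prod_col_sum`).

If equality holds, every non-injective `f` contributes zero.  As `det M ≠ 0`, some permutation `σ`
has `∏_d M (σ d) d ≠ 0`; a further nonzero entry `M c d` with `c ≠ σ d` would make the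
non-injective map `Function.update σ d c` contribute a positive amount.  So `M` is supported on the
graph of `σ` (`exists_perm_of_abs_det_eq`), which forces `C = C* π_σ`.
-/

/-- The absolute determinant of a nonnegative matrix is at most its permanent. -/
lemma abs_det_le_sum_perm {k : ℕ} (M : Matrix (Fin k) (Fin k) ℝ) (hM : ∀ c d, 0 ≤ M c d) :
    |M.det| ≤ ∑ σ : Equiv.Perm (Fin k), ∏ d, M (σ d) d := by
  rw [Matrix.det_apply']
  refine (Finset.abs_sum_le_sum_abs _ _).trans (Finset.sum_le_sum fun σ _ => ?_)
  rw [abs_mul, abs_of_nonneg (Finset.prod_nonneg fun d _ => hM (σ d) d)]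
  rcases Int.units_eq_one_or (Equiv.Perm.sign σ) with h | h <;> simp [h]

/-- The bound by the product of the column sums, keeping one extra term: a single non-injective
selection `f` can be added on the left. -/
lemma abs_det_add_le_prod_col_sum {k : ℕ} (M : Matrix (Fin k) (Fin k) ℝ)
    (hM : ∀ c d, 0 ≤ M c d) (f : Fin k → Fin k) (hf : ¬ Function.Injective f) :
    |M.det| + ∏ d, M (f d) d ≤ ∏ d, ∑ c, M c d := by
  classical
  have hinj : Function.Injective (fun σ : Equiv.Perm (Fin k) => (σ : Fin k → Fin k)) :=
    DFunLike.coe_injective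
  have hsum : ∑ h ∈ Finset.univ.map ⟨_, hinj⟩, ∏ d, M (h d) d
      = ∑ σ : Equiv.Perm (Fin k), ∏ d, M (σ d) d := by
    rw [Finset.sum_map]; rfl
  have hnot : f ∉ Finset.univ.map ⟨_, hinj⟩ := by
    intro hmem
    obtain ⟨σ, -, rfl⟩ := Finset.mem_map.1 hmem
    exact hf σ.injective
  have hexp : ∏ d, ∑ c, M c d = ∑ h : Fin k → Fin k, ∏ d, M (h d) d := by
    rw [Finset.prod_univ_sum, Fintype.piFinset_univ]
  calc |M.det| + ∏ d, M (f d) d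
      ≤ ∏ d, M (f d) d + ∑ h ∈ Finset.univ.map ⟨_, hinj⟩, ∏ d, M (h d) d := by
        rw [hsum, add_comm]
        gcongr
        exact abs_det_le_sum_perm M hM
    _ = ∑ h ∈ insert f (Finset.univ.map ⟨_, hinj⟩), ∏ d, M (h d) d :=
        (Finset.sum_insert (f := fun h : Fin k → Fin k => ∏ d, M (h d) d) hnot).symm
    _ ≤ ∑ h : Fin k → Fin k, ∏ d, M (h d) d :=
        Finset.sum_le_sum_of_subset_of_nonneg (Finset.subset_univ _)
          fun h _ _ => Finset.prod_nonneg fun d _ => hM (h d) d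
    _ = _ := hexp.symm

lemma abs_det_le_prod_col_sum {k : ℕ} (M : Matrix (Fin k) (Fin k) ℝ)
    (hM : ∀ c d, 0 ≤ M c d) : |M.det| ≤ ∏ d, ∑ c, M c d := by
  by_cases h : ∃ f : Fin k → Fin k, ¬ Function.Injective f
  · obtain ⟨f, hf⟩ := h
    have h1 := abs_det_add_le_prod_col_sum M hM f hf
    have h2 : 0 ≤ ∏ d, M (f d) d := Finset.prod_nonneg fun d _ => hM (f d) d
    linarith
  · push Not at h
    -- All selections are injective only if `k ≤ 1`.
    have hk : Subsingleton (Fin k) := ⟨fun a b => h (fun _ => a) rfl⟩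
    rcases isEmpty_or_nonempty (Fin k) with he | ⟨⟨a⟩⟩
    · simp
    · have : Unique (Fin k) := ⟨⟨a⟩, fun b => Subsingleton.elim _ _⟩
      simp [Matrix.det_unique, abs_of_nonneg (hM _ _)]

/-- A nonnegative matrix attaining the column-sum bound with positive value is supported on the
graph of a permutation. -/
lemma exists_perm_of_abs_det_eq {k : ℕ} (M : Matrix (Fin k) (Fin k) ℝ)
    (hM : ∀ c d, 0 ≤ M c d) (hpos : 0 < ∏ d, ∑ c, M c d)
    (heq : |M.det| = ∏ d, ∑ c, M c d) :
    ∃ σ : Equiv.Perm (Fin k), ∀ c d, c ≠ σ d → M c d = 0 := by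
  have hperm := abs_det_le_sum_perm M hM
  obtain ⟨σ, -, hσ⟩ := Finset.exists_ne_zero_of_sum_ne_zero
    (lt_of_lt_of_le (heq ▸ hpos) hperm).ne'
  refine ⟨σ, fun c d hcd => ?_⟩
  by_contra hne
  have hf : ¬ Function.Injective (Function.update (σ : Fin k → Fin k) d c) := by
    intro hinj
    have hd : σ.symm c ≠ d := fun h => hcd (by rw [← h, Equiv.apply_symm_apply])
    refine hd (hinj ?_)
    rw [Function.update_of_ne hd, Function.update_self, Equiv.apply_symm_apply]
  have hprod : 0 < ∏ e, M (Function.update (σ : Fin k → Fin k) d c e) e := by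
    refine Finset.prod_pos fun e _ => (hM _ _).lt_of_ne' ?_
    by_cases he : e = d
    · subst he
      rwa [Function.update_self]
    · rw [Function.update_of_ne he]
      exact Finset.prod_ne_zero_iff.1 hσ e (Finset.mem_univ e)
  have := abs_det_add_le_prod_col_sum M hM _ hf
  linarith

/-- **Legality of DMI-clustering.** If `C*` is a hard clustering matrix
(0-1, one 1 per row, encoded by the cluster assignment `g`) with every column nonzero
(`g` surjective), `B` is invertible and `A = C* B`, then every soft clustering matrix `C`
(entries in `[0,1]`, rows summing to 1) satisfies `|det(Cᵀ A)| ≤ |det(C*ᵀ A)|`, with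
equality iff `C = C* π` for a permutation matrix `π`. -/
theorem dmi_clustering_legal (n k : ℕ) (g : Fin n → Fin k)
    (Cstar : Matrix (Fin n) (Fin k) ℝ)
    (hCstar : Cstar = fun i c => if g i = c then 1 else 0)
    (hcolnonzero : Function.Surjective g)
    (B : Matrix (Fin k) (Fin k) ℝ) (hB : IsUnit B)
    (A : Matrix (Fin n) (Fin k) ℝ) (hA : A = Cstar * B) :
    ∀ C : Matrix (Fin n) (Fin k) ℝ,
      (∀ i c, 0 ≤ C i c ∧ C i c ≤ 1) → (∀ i, ∑ c, C i c = 1) →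
      |(Cᵀ * A).det| ≤ |(Cstarᵀ * A).det| ∧
      (|(Cᵀ * A).det| = |(Cstarᵀ * A).det| ↔
        ∃ σ : Equiv.Perm (Fin k), C = Cstar * σ.permMatrix ℝ) := by
  intro C hC hrow
  have hBdet : 0 < |B.det| :=
    abs_pos.2 ((Matrix.isUnit_iff_isUnit_det B).1 hB).ne_zero
  have hentry : ∀ i c, Cstar i c = if g i = c then 1 else 0 := fun i c => by rw [hCstar]
  have hfac : ∀ D : Matrix (Fin n) (Fin k) ℝ,
      |(Dᵀ * A).det| = |(Dᵀ * Cstar).det| * |B.det| := fun D => by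
    rw [hA, ← Matrix.mul_assoc, Matrix.det_mul, abs_mul]
  have hMentry : ∀ (D : Matrix (Fin n) (Fin k) ℝ) c d,
      (Dᵀ * Cstar) c d = ∑ i, if g i = d then D i c else 0 := fun D c d => by
    simp [Matrix.mul_apply, hentry]
  have hM : ∀ c d, 0 ≤ (Cᵀ * Cstar) c d := fun c d => by
    rw [hMentry]
    exact Finset.sum_nonneg fun i _ => by split_ifs; exacts [(hC i c).1, le_rfl]
  have hcol : ∀ d, ∑ c, (Cᵀ * Cstar) c d = ∑ i, if g i = d then (1 : ℝ) else 0 := fun d => by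
    simp_rw [hMentry]
    rw [Finset.sum_comm]
    refine Finset.sum_congr rfl fun i _ => ?_
    split_ifs
    exacts [hrow i, Finset.sum_const_zero]
  have hsize : ∀ d, 0 < ∑ i, if g i = d then (1 : ℝ) else 0 := fun d => by
    obtain ⟨i, hi⟩ := hcolnonzero d
    exact Finset.sum_pos' (fun j _ => by split_ifs <;> norm_num)
      ⟨i, Finset.mem_univ i, by simp [hi]⟩
  have hprodpos : 0 < ∏ d, ∑ c, (Cᵀ * Cstar) c d :=
    Finset.prod_pos fun d _ => by rw [hcol]; exact hsize d
  have hstar : |(Cstarᵀ * Cstar).det| = ∏ d, ∑ c, (Cᵀ * Cstar) c d := by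
    have hdiag : Cstarᵀ * Cstar =
        Matrix.diagonal fun d => ∑ i, if g i = d then (1 : ℝ) else 0 := by
      ext c d
      rw [hMentry]
      by_cases hcd : c = d
      · subst hcd
        rw [Matrix.diagonal_apply_eq]
        refine Finset.sum_congr rfl fun i _ => ?_
        split_ifs with h <;> simp [hentry, h]
      · rw [Matrix.diagonal_apply_ne _ hcd]
        refine Finset.sum_eq_zero fun i _ => ?_
        split_ifs with h
        · rw [hentry, if_neg]
          rintro rfl
          exact hcd h
        · rfl
    rw [hdiag, Matrix.det_diagonal, abs_of_pos (Finset.prod_pos fun d _ => hsize d)]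
    exact Finset.prod_congr rfl fun d _ => (hcol d).symm
  have hCperm : ∀ (σ : Equiv.Perm (Fin k)) i c,
      (Cstar * σ.permMatrix ℝ) i c = if σ (g i) = c then 1 else 0 := fun σ i c => by
    simp only [Matrix.mul_apply, hentry, ite_mul, one_mul, zero_mul, Finset.sum_ite_eq,
      Finset.mem_univ, if_true]
    simp [PEquiv.toMatrix_apply, eq_comm]
  refine ⟨?_, ?_, ?_⟩
  · rw [hfac, hfac, hstar]
    exact mul_le_mul_of_nonneg_right (abs_det_le_prod_col_sum _ hM) hBdet.le
  · intro heq
    rw [hfac, hfac, hstar] at heq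
    obtain ⟨σ, hσ⟩ := exists_perm_of_abs_det_eq _ hM hprodpos
      (mul_right_cancel₀ hBdet.ne' heq)
    have hzero : ∀ i c, c ≠ σ (g i) → C i c = 0 := fun i c hc => by
      have h := hσ c (g i) hc
      rw [hMentry, Finset.sum_eq_zero_iff_of_nonneg
        (fun j _ => by split_ifs; exacts [(hC j c).1, le_rfl])] at h
      simpa using h i (Finset.mem_univ i)
    refine ⟨σ, ?_⟩
    ext i c
    rw [hCperm]
    split_ifs with h
    · subst h
      rw [← hrow i]
      exact (Finset.sum_eq_single _ (fun c _ hc => hzero i c hc) (by simp)).symm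
    · exact hzero i c (Ne.symm h)
  · rintro ⟨σ, rfl⟩
    rw [Matrix.transpose_mul, Matrix.mul_assoc, Matrix.det_mul, Matrix.det_transpose,
      Matrix.det_permutation, abs_mul]
    rcases Int.units_eq_one_or (Equiv.Perm.sign σ) with h | h <;> simp [h]
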